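/- arXiv:1606.00323 — 2 statements merged into one kernel-verified Lean document; each statement's English description precedes it below -/
import Mathlib

section
/- Let G be a connected bridgeless multigraph, choose one edge e_S in each C1-set S of G, and let G^(3) be the graph obtained by contracting all edges not of the form e_S. Then no cycle of G is collapsed to a vertex, and the map sending a cycle C of G to the set { e_S : S ⊆ C } is a bijection from the set of cycles of G onto the set of cycles of G^(3). -/
/-- A finite multigraph: finite vertex and edge types, each edge carrying a source and a
target vertex (this is an auxiliary orientation); loops and parallel edges are allowed. -/
structure Multigraph where
  V : Type
  E : Type
  [fV : Fintype V]
  [fE : Fintype E]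
  [dV : DecidableEq V]
  [dE : DecidableEq E]
  s : E → V
  t : E → V

attribute [instance] Multigraph.fV Multigraph.fE Multigraph.dV Multigraph.dE

namespace Multigraph

variable (G : Multigraph)

/-- Two vertices are adjacent if some edge joins them. -/
def Adj (a b : G.V) : Prop :=
  ∃ e : G.E, (G.s e = a ∧ G.t e = b) ∨ (G.s e = b ∧ G.t e = a)

/-- A multigraph is connected if it is nonempty and any two vertices are joined by a walk. -/
def Connected : Prop :=
  Nonempty G.V ∧ ∀ a b : G.V, Relation.ReflTransGen G.Adj a b

/-- The graph obtained by deleting the edges in `F` is connected. -/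
def ConnectedAvoiding (F : Set G.E) : Prop :=
  ∀ a b : G.V, Relation.ReflTransGen
    (fun x y => ∃ e : G.E, e ∉ F ∧ ((G.s e = x ∧ G.t e = y) ∨ (G.s e = y ∧ G.t e = x))) a b

/-- The valency of a vertex: the number of half-edges at it (a loop counts twice). -/
def val (v : G.V) : ℕ :=
  (Finset.univ.filter (fun e => G.s e = v)).card + (Finset.univ.filter (fun e => G.t e = v)).card

/-- The number of loops based at a vertex. -/
def loops (v : G.V) : ℕ :=
  (Finset.univ.filter (fun e => G.s e = v ∧ G.t e = v)).card

/-- The number of edges joining two vertices. -/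
def edgesBetween (v w : G.V) : ℕ :=
  (Finset.univ.filter (fun e => (G.s e = v ∧ G.t e = w) ∨ (G.s e = w ∧ G.t e = v))).card

/-- The first Betti number `b₁(G) = |E| - |V| + 1` (of a connected graph). -/
def b1 : ℤ := (Fintype.card G.E : ℤ) - (Fintype.card G.V : ℤ) + 1

/-- The boundary map `∂ : C₁(G,ℤ) → C₀(G,ℤ)`, sending an edge `e` to `t e - s e`. -/
def boundaryHom : (G.E → ℤ) →+ (G.V → ℤ) where
  toFun c := fun v =>
    ∑ e : G.E, c e * ((if G.t e = v then 1 else 0) - (if G.s e = v then 1 else 0))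
  map_zero' := by funext v; simp
  map_add' a b := by
    funext v
    simp [Pi.add_apply, add_mul, Finset.sum_add_distrib]

/-- The coboundary map `δ : C₀(G,ℤ) → C₁(G,ℤ)`. -/
def coboundaryHom : (G.V → ℤ) →+ (G.E → ℤ) where
  toFun f := fun e => f (G.t e) - f (G.s e)
  map_zero' := by funext e; simp
  map_add' a b := by funext e; simp only [Pi.add_apply]; ring

/-- The cycle space `H₁(G,ℤ)`, i.e. the kernel of the boundary map. -/
def cycleSpace : AddSubgroup (G.E → ℤ) := (G.boundaryHom).ker

/-- `C` is the edge set of a closed walk with no repeated vertices except the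
initial/terminal one (so a loop is a cycle). -/
def IsCycle (C : Finset G.E) : Prop :=
  ∃ n : ℕ, 0 < n ∧ ∃ (e : Fin n → G.E) (v : Fin (n + 1) → G.V),
    Function.Injective e ∧
    (∀ i : Fin n, (G.s (e i) = v i.castSucc ∧ G.t (e i) = v i.succ) ∨
        (G.s (e i) = v i.succ ∧ G.t (e i) = v i.castSucc)) ∧
    v 0 = v (Fin.last n) ∧
    (∀ i j : Fin (n + 1), v i = v j →
        i = j ∨ (i = 0 ∧ j = Fin.last n) ∨ (i = Fin.last n ∧ j = 0)) ∧
    C = Finset.image e Finset.univ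

/-- A bridge (separating edge) is an edge contained in no cycle. -/
def IsBridge (e : G.E) : Prop := ∀ C : Finset G.E, G.IsCycle C → e ∉ C

def Bridgeless : Prop := ∀ e : G.E, ¬ G.IsBridge e

/-- `e₁ ∼ e₂` iff every cycle containing `e₁` contains `e₂` and conversely. -/
def Sim (e₁ e₂ : G.E) : Prop :=
  ∀ C : Finset G.E, G.IsCycle C → (e₁ ∈ C ↔ e₂ ∈ C)

/-- The C1-sets: the equivalence classes of the relation `Sim`. -/
def IsC1Set (S : Set G.E) : Prop := ∃ e : G.E, S = {e' | G.Sim e e'}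

/-- The multigraph obtained by contracting every edge in `F` (a contracted loop is
simply deleted). -/
noncomputable def contractSet (F : Set G.E) : Multigraph :=
  letI : DecidableEq (Quot (fun a b : G.V => ∃ e ∈ F, G.s e = a ∧ G.t e = b)) :=
    Classical.decEq _
  { V := Quot (fun a b : G.V => ∃ e ∈ F, G.s e = a ∧ G.t e = b)
    E := {e : G.E // e ∉ F}
    fV := Fintype.ofSurjective (Quot.mk _) (fun q => Quot.exists_rep q)
    fE := Fintype.ofInjective (Subtype.val) Subtype.val_injective
    dV := inferInstance
    dE := inferInstance
    s := fun e => Quot.mk _ (G.s e.1)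
    t := fun e => Quot.mk _ (G.t e.1) }

/-- `G^(2)`: the multigraph obtained from `G` by contracting every bridge. -/
noncomputable def contractBridges : Multigraph := G.contractSet {e | G.IsBridge e}

/-- An isomorphism of multigraphs. -/
structure Iso (G₁ G₂ : Multigraph) where
  vEquiv : G₁.V ≃ G₂.V
  eEquiv : G₁.E ≃ G₂.E
  endpoints : ∀ e : G₁.E,
    (G₂.s (eEquiv e) = vEquiv (G₁.s e) ∧ G₂.t (eEquiv e) = vEquiv (G₁.t e)) ∨
    (G₂.s (eEquiv e) = vEquiv (G₁.t e) ∧ G₂.t (eEquiv e) = vEquiv (G₁.s e))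

/-- The group of degree-zero divisors `Div⁰(G)`. -/
def Div0 : AddSubgroup (G.V → ℤ) where
  carrier := {D : G.V → ℤ | ∑ v : G.V, D v = 0}
  zero_mem' := by simp
  add_mem' := by
    intro a b ha hb
    simp only [Set.mem_setOf_eq, Pi.add_apply] at *
    simp [Finset.sum_add_distrib, ha, hb]
  neg_mem' := by
    intro a ha
    simp only [Set.mem_setOf_eq, Pi.neg_apply] at *
    simp [ha]

/-- The principal divisor `div(f_v)` associated to a vertex `v`. -/
def prinDiv (v : G.V) : G.V → ℤ :=
  fun u => if u = v then 2 * (G.loops v : ℤ) - (G.val v : ℤ) else (G.edgesBetween v u : ℤ)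

/-- The group of principal divisors `Prin(G)`. -/
def Prin : AddSubgroup (G.V → ℤ) := AddSubgroup.closure (Set.range G.prinDiv)

end Multigraph

/-- `Jac(G₁) ≅ Jac(G₂)`: a ℤ-linear isomorphism of the cycle lattices preserving the
bilinear forms for which the edges are orthonormal. -/
def JacIsoGraph (G₁ G₂ : Multigraph) : Prop :=
  ∃ φ : G₁.cycleSpace ≃+ G₂.cycleSpace,
    ∀ x y : G₁.cycleSpace,
      (∑ e : G₂.E, ((φ x : G₂.E → ℤ) e) * ((φ y : G₂.E → ℤ) e)) =
      ∑ e : G₁.E, ((x : G₁.E → ℤ) e) * ((y : G₁.E → ℤ) e)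

/-- Cyclic equivalence of two multigraphs: a bijection of the edge sets, together with
signs, inducing an isomorphism of the cycle spaces. -/
def CyclicallyEquivalent (G₁ G₂ : Multigraph) : Prop :=
  ∃ (σ : G₁.E ≃ G₂.E) (ε : G₁.E → ℤ),
    (∀ e, ε e = 1 ∨ ε e = -1) ∧
    ((fun x : G₁.E → ℤ => fun e₂ : G₂.E => ε (σ.symm e₂) * x (σ.symm e₂)) ''
        (G₁.cycleSpace : Set (G₁.E → ℤ))) = (G₂.cycleSpace : Set (G₂.E → ℤ))

/-- Cyclic equivalence of metric graphs: as for graphs, with a length-preserving bijection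
of the edge sets. -/
def MetricCycEquiv (G₁ : Multigraph) (ℓ₁ : G₁.E → ℝ) (G₂ : Multigraph) (ℓ₂ : G₂.E → ℝ) : Prop :=
  ∃ (σ : G₁.E ≃ G₂.E) (ε : G₁.E → ℤ),
    (∀ e, ℓ₂ (σ e) = ℓ₁ e) ∧
    (∀ e, ε e = 1 ∨ ε e = -1) ∧
    ((fun x : G₁.E → ℤ => fun e₂ : G₂.E => ε (σ.symm e₂) * x (σ.symm e₂)) ''
        (G₁.cycleSpace : Set (G₁.E → ℤ))) = (G₂.cycleSpace : Set (G₂.E → ℤ))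

/-- `c` chooses one representative edge in each C1-set (i.e. in each `Sim`-class). -/
def IsC1Choice (H : Multigraph) (c : H.E → H.E) : Prop :=
  (∀ e, H.Sim e (c e)) ∧ ∀ e e' : H.E, H.Sim e e' → c e = c e'

/-- The graph `G^(3)` obtained by contracting, in each C1-set, all edges except the
chosen one. -/
noncomputable def threeGraph (H : Multigraph) (c : H.E → H.E) : Multigraph :=
  H.contractSet {e | c e ≠ e}

/-- The length function on `G^(3)`: a surviving edge gets the total length of its C1-set. -/
noncomputable def threeLength (H : Multigraph) (ℓ : H.E → ℝ) (c : H.E → H.E) :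
    (threeGraph H c).E → ℝ :=
  fun e => ∑ e' ∈ Finset.univ.filter (fun e' => c e' = e.1), ℓ e'

/-- A weighted graph: a multigraph with a weight function on the vertices. -/
structure WeightedGraph where
  G : Multigraph
  w : G.V → ℕ

namespace WeightedGraph

/-- The genus `g(G,w) = b₁(G) + Σ_v w(v)`. -/
def genus (X : WeightedGraph) : ℤ := X.G.b1 + ∑ v : X.G.V, (X.w v : ℤ)

/-- A weighted graph is stable if it is connected, has genus at least 2, and every
vertex of weight zero has valency at least 3. -/
def Stable (X : WeightedGraph) : Prop :=
  X.G.Connected ∧ 2 ≤ X.genus ∧ ∀ v : X.G.V, X.w v = 0 → 3 ≤ X.G.val v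

/-- An isomorphism of weighted graphs. -/
structure Iso (X Y : WeightedGraph) where
  vEquiv : X.G.V ≃ Y.G.V
  eEquiv : X.G.E ≃ Y.G.E
  endpoints : ∀ e : X.G.E,
    (Y.G.s (eEquiv e) = vEquiv (X.G.s e) ∧ Y.G.t (eEquiv e) = vEquiv (X.G.t e)) ∨
    (Y.G.s (eEquiv e) = vEquiv (X.G.t e) ∧ Y.G.t (eEquiv e) = vEquiv (X.G.s e))
  weight_eq : ∀ v : X.G.V, Y.w (vEquiv v) = X.w v

/-- Contraction of a single edge of a weighted graph: a non-loop edge is contracted by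
identifying its two endpoints, the new vertex receiving the sum of the two weights;
a loop is deleted, the weight of its base vertex increasing by 1. -/
noncomputable def contract (X : WeightedGraph) (e₀ : X.G.E) : WeightedGraph :=
  letI : DecidableEq (Quot (fun a b : X.G.V => a = X.G.s e₀ ∧ b = X.G.t e₀)) :=
    Classical.decEq _
  { G := { V := Quot (fun a b : X.G.V => a = X.G.s e₀ ∧ b = X.G.t e₀)
           E := {e : X.G.E // e ≠ e₀}
           fV := Fintype.ofSurjective (Quot.mk _) (fun q => Quot.exists_rep q)
           fE := inferInstance
           dV := inferInstance
           dE := inferInstance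
           s := fun e => Quot.mk _ (X.G.s e.1)
           t := fun e => Quot.mk _ (X.G.t e.1) }
    w := fun q =>
      (∑ v ∈ Finset.univ.filter
          (fun v => Quot.mk (fun a b : X.G.V => a = X.G.s e₀ ∧ b = X.G.t e₀) v = q), X.w v) +
      (if X.G.s e₀ = X.G.t e₀ ∧
          Quot.mk (fun a b : X.G.V => a = X.G.s e₀ ∧ b = X.G.t e₀) (X.G.s e₀) = q
       then 1 else 0) }

/-- One step: `Y` is (isomorphic to) the contraction of a single edge of `X`. -/
def ContractStep (X Y : WeightedGraph) : Prop :=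
  ∃ e : X.G.E, Nonempty ((X.contract e).Iso Y)

/-- `X.ContractsTo Y`: `Y` is obtained from `X` by contracting finitely many edges. -/
def ContractsTo : WeightedGraph → WeightedGraph → Prop :=
  Relation.ReflTransGen ContractStep

/-- A sequence of exactly `n` loop contractions from `X` ending at (a graph isomorphic
to) `Y`. -/
def LoopContractSeq : ℕ → WeightedGraph → WeightedGraph → Prop
  | 0, X, Y => Nonempty (X.Iso Y)
  | n + 1, X, Y => ∃ e : X.G.E, X.G.s e = X.G.t e ∧ LoopContractSeq n (X.contract e) Y

/-- The weightless graph `G''` obtained by replacing each vertex `v` of positive weight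
with a weight-zero vertex carrying `w v` new loops. -/
def blowUp (X : WeightedGraph) : WeightedGraph where
  G := { V := X.G.V
         E := X.G.E ⊕ (Σ v : X.G.V, Fin (X.w v))
         fV := inferInstance
         fE := inferInstance
         dV := inferInstance
         dE := inferInstance
         s := Sum.elim X.G.s (fun p => p.1)
         t := Sum.elim X.G.t (fun p => p.1) }
  w := fun _ => 0

def totalWeight (X : WeightedGraph) : ℕ := ∑ v : X.G.V, X.w v

/-- The lattice `Λ = H₁(G,ℤ) ⊕ ℤ^(g - b₁(G))` underlying the Jacobian torus of a
weighted graph. -/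
abbrev JacLattice (X : WeightedGraph) : Type :=
  ↥X.G.cycleSpace × (Fin X.totalWeight → ℤ)

/-- The bilinear form on the Jacobian lattice: on `H₁(G,ℤ)` the edges are orthonormal,
and the form vanishes on the extra summand. -/
def jacForm (X : WeightedGraph) (p q : X.JacLattice) : ℤ :=
  ∑ e : X.G.E, (p.1 : X.G.E → ℤ) e * (q.1 : X.G.E → ℤ) e

end WeightedGraph

/-- A pure tropical curve: a multigraph with positive edge lengths. -/
structure PureTropicalCurve where
  G : Multigraph
  ℓ : G.E → ℝ
  pos : ∀ e, 0 < ℓ e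

/-- A (weighted) tropical curve: a multigraph with vertex weights and positive edge
lengths. -/
structure TropicalCurve where
  G : Multigraph
  w : G.V → ℕ
  ℓ : G.E → ℝ
  pos : ∀ e, 0 < ℓ e

namespace TropicalCurve

def totalWeight (Γ : TropicalCurve) : ℕ := ∑ v : Γ.G.V, Γ.w v

/-- The lattice `Λ = H₁(G,ℤ) ⊕ ℤ^(g - b₁(G))` underlying `Jac(Γ)`. -/
abbrev JacLattice (Γ : TropicalCurve) : Type :=
  ↥Γ.G.cycleSpace × (Fin Γ.totalWeight → ℤ)

/-- The bilinear form `( , )_ℓ` on the Jacobian lattice, vanishing on the extra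
summand. -/
noncomputable def jacForm (Γ : TropicalCurve) (p q : Γ.JacLattice) : ℝ :=
  ∑ e : Γ.G.E, Γ.ℓ e * ((p.1 : Γ.G.E → ℤ) e : ℝ) * ((q.1 : Γ.G.E → ℤ) e : ℝ)

end TropicalCurve

/-- `Jac(Γ₁) ≅ Jac(Γ₂)`: a ℤ-linear isomorphism of the lattices preserving the bilinear
forms. -/
def TropJacIso (Γ₁ Γ₂ : TropicalCurve) : Prop :=
  ∃ φ : Γ₁.JacLattice ≃+ Γ₂.JacLattice,
    ∀ p q : Γ₁.JacLattice, Γ₂.jacForm (φ p) (φ q) = Γ₁.jacForm p q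

/-!
Over `ZMod 2`, the cycles of `G` are the minimal nonempty even edge sets, and every edge of an
even set lies on a cycle contained in it. Two equivalent edges therefore lie in the same even sets,
so an even set is determined, compatibly with inclusion, by its surviving edges. Conversely every
even set of the contraction lifts to `G`, because the boundary of the lifted edges vanishes in the
quotient and is therefore the boundary of a set of contracted edges. Hence `D ↦ surviving F D` is an
isomorphism of posets from the even sets of `G` to those of the contraction, and it matches the
minimal nonempty elements.
-/

theorem mem_span_of_mapDomain_quotMk_eq_zero {R α : Type*} [Ring R] {r : α → α → Prop}
    {d : α →₀ R} (hd : d.mapDomain (Quot.mk r) = 0) :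
    d ∈ Submodule.span R
      {x | ∃ a b, r a b ∧ x = Finsupp.single a (1 : R) - Finsupp.single b 1} := by
  set S := Submodule.span R
    {x | ∃ a b, r a b ∧ x = Finsupp.single a (1 : R) - Finsupp.single b 1}
  have hr : ∀ a b, r a b → S.mkQ (Finsupp.single a 1) = S.mkQ (Finsupp.single b 1) :=
    fun a b hab => (Submodule.Quotient.eq S).2 (Submodule.subset_span ⟨a, b, hab, rfl⟩)
  -- The projection modulo `S` factors through the chains on the quotient.
  let φ : (Quot r →₀ R) →ₗ[R] (α →₀ R) ⧸ S :=
    Finsupp.linearCombination R (Quot.lift (fun a => S.mkQ (Finsupp.single a 1)) hr)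
  have hφ : φ ∘ₗ Finsupp.lmapDomain R R (Quot.mk r) = S.mkQ := by
    ext a
    simp [φ]
  rw [← S.ker_mkQ, LinearMap.mem_ker, ← hφ, LinearMap.comp_apply, Finsupp.lmapDomain_apply, hd,
    map_zero]

theorem exists_finset_sum_eq_of_mem_span_zmod_two {ι M : Type*} [AddCommMonoid M]
    [Module (ZMod 2) M] {f : ι → M} {s : Set ι} {x : M}
    (hx : x ∈ Submodule.span (ZMod 2) (f '' s)) :
    ∃ t : Finset ι, ↑t ⊆ s ∧ ∑ i ∈ t, f i = x := by
  obtain ⟨l, hl, rfl⟩ := (Finsupp.mem_span_image_iff_linearCombination _).1 hx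
  refine ⟨l.support, hl, Finset.sum_congr rfl fun i hi => ?_⟩
  have hli : l i = 1 := Fin.eq_one_of_ne_zero (l i) (Finsupp.mem_support_iff.1 hi)
  simp [hli]

namespace Multigraph

variable {G : Multigraph} {C D D₁ D₂ : Finset G.E} {F : Set G.E}

/-- The edge `e` has endpoints `a` and `b`, in either orientation. -/
def Joins (G : Multigraph) (e : G.E) (a b : G.V) : Prop :=
  (G.s e = a ∧ G.t e = b) ∨ (G.s e = b ∧ G.t e = a)

/-- The boundary of an edge as a 0-chain over `ZMod 2`; the boundary of a loop is zero. -/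
noncomputable def boundaryTwo (G : Multigraph) (e : G.E) : G.V →₀ ZMod 2 :=
  Finsupp.single (G.s e) 1 + Finsupp.single (G.t e) 1

/-- An edge set is even if every vertex has even valency in it, i.e. if it is a 1-cycle over
`ZMod 2`. -/
def IsEven (G : Multigraph) (D : Finset G.E) : Prop :=
  ∑ e ∈ D, G.boundaryTwo e = 0

theorem Joins.boundaryTwo_eq {e : G.E} {a b : G.V} (h : G.Joins e a b) :
    G.boundaryTwo e = Finsupp.single a 1 + Finsupp.single b 1 := by
  rcases h with ⟨rfl, rfl⟩ | ⟨rfl, rfl⟩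
  · rfl
  · exact add_comm _ _

theorem Joins.eq_and_eq_or {e : G.E} {a b x y : G.V} (h : G.Joins e a b) (h' : G.Joins e x y) :
    (a = x ∧ b = y) ∨ (a = y ∧ b = x) := by
  unfold Joins at h h'
  grind

theorem IsEven.sum_add_eq_zero (hD : G.IsEven D) (f : G.V → ZMod 2) :
    ∑ e ∈ D, (f (G.s e) + f (G.t e)) = 0 := by
  simpa [boundaryTwo] using congrArg (Finsupp.linearCombination (ZMod 2) f) hD

theorem IsCycle.nonempty (hC : G.IsCycle C) : C.Nonempty := by
  obtain ⟨n, hn, e, v, -, -, -, -, rfl⟩ := hC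
  exact ⟨e ⟨0, hn⟩, Finset.mem_image_of_mem e (Finset.mem_univ _)⟩

theorem IsCycle.isEven (hC : G.IsCycle C) : G.IsEven C := by
  obtain ⟨n, -, e, v, he, hjoins, hclosed, -, rfl⟩ := hC
  have hrotate : ∑ i : Fin n, Finsupp.single (v i.castSucc) (1 : ZMod 2) =
      ∑ i : Fin n, Finsupp.single (v i.succ) 1 := by
    have h := Fin.sum_univ_succ fun i => Finsupp.single (v i) (1 : ZMod 2)
    rwa [Fin.sum_univ_castSucc, hclosed, add_comm, add_right_inj] at h
  rw [IsEven, Finset.sum_image he.injOn,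
    Finset.sum_congr rfl fun i _ => Joins.boundaryTwo_eq (hjoins i), Finset.sum_add_distrib,
    hrotate, ZModModule.add_self]

/-- The simple graph of adjacency along non-loop edges of `D`; it makes the walks and paths of
Mathlib available. -/
def simpleGraphOn (G : Multigraph) (D : Finset G.E) : SimpleGraph G.V where
  Adj a b := a ≠ b ∧ ∃ e ∈ D, G.Joins e a b
  symm := ⟨fun _ _ ⟨hne, e, he, h⟩ => ⟨hne.symm, e, he, h.symm⟩⟩
  loopless := ⟨fun _ h => h.1 rfl⟩

theorem reachable_simpleGraphOn {e : G.E} (he : e ∈ D) :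
    (G.simpleGraphOn D).Reachable (G.s e) (G.t e) := by
  by_cases hloop : G.s e = G.t e
  · rw [hloop]
  · exact SimpleGraph.Adj.reachable ⟨hloop, e, he, Or.inl ⟨rfl, rfl⟩⟩

/-- Otherwise `D` would meet a cut in exactly one edge. -/
theorem IsEven.reachable_erase (hD : G.IsEven D) {e : G.E} (he : e ∈ D) :
    (G.simpleGraphOn (D.erase e)).Reachable (G.t e) (G.s e) := by
  classical
  by_contra hcut
  let side (v : G.V) : ZMod 2 :=
    if (G.simpleGraphOn (D.erase e)).Reachable (G.t e) v then 1 else 0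
  have hside : ∀ e' ∈ D, e' ≠ e → side (G.s e') + side (G.t e') = 0 := by
    intro e' he' hne
    have hst := reachable_simpleGraphOn (Finset.mem_erase.2 ⟨hne, he'⟩)
    have hiff : (G.simpleGraphOn (D.erase e)).Reachable (G.t e) (G.s e') ↔
        (G.simpleGraphOn (D.erase e)).Reachable (G.t e) (G.t e') :=
      ⟨fun h => h.trans hst, fun h => h.trans hst.symm⟩
    simp only [side, hiff, ZModModule.add_self]
  have hsum := hD.sum_add_eq_zero side
  rw [Finset.sum_eq_single_of_mem e he hside] at hsum
  simp [side, hcut] at hsum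

theorem isCycle_insert_image {m : ℕ} {e₀ : G.E} {f : Fin m → G.E} {p : Fin (m + 1) → G.V}
    (hp : Function.Injective p) (hf : ∀ i, G.Joins (f i) (p i.castSucc) (p i.succ))
    (he₀ : G.Joins e₀ (p (Fin.last m)) (p 0)) (hne : ∀ i, f i ≠ e₀) :
    G.IsCycle (insert e₀ (Finset.univ.image f)) := by
  have hf_inj : Function.Injective f := by
    intro i j hij
    have hends := (hf i).eq_and_eq_or (hij ▸ hf j)
    simp only [hp.eq_iff, Fin.ext_iff, Fin.val_castSucc, Fin.val_succ] at hends
    omega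
  refine ⟨m + 1, m.succ_pos, Fin.cons e₀ f, Fin.cons (p (Fin.last m)) p,
    Fin.cons_injective_iff.2 ⟨fun ⟨i, hi⟩ => hne i hi, hf_inj⟩, ?_, ?_, ?_, ?_⟩
  · exact Fin.cases he₀ hf
  · rw [← Fin.succ_last, Fin.cons_zero, Fin.cons_succ]
  · intro i j
    induction i using Fin.cases <;> induction j using Fin.cases <;>
      simp only [Fin.cons_zero, Fin.cons_succ, hp.eq_iff] <;> grind
  · ext a
    simp [Fin.exists_fin_succ, eq_comm]

theorem IsEven.exists_isCycle_mem (hD : G.IsEven D) {e : G.E} (he : e ∈ D) :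
    ∃ C ⊆ D, G.IsCycle C ∧ e ∈ C := by
  obtain ⟨p, hp⟩ := (hD.reachable_erase he).exists_isPath
  choose f hfD hf using fun i : Fin p.length => (p.adj_getVert_succ i.2).2
  refine ⟨insert e (Finset.univ.image f), ?_, ?_, Finset.mem_insert_self _ _⟩
  · simp only [Finset.insert_subset_iff, he, Finset.image_subset_iff, true_and]
    exact fun i _ => Finset.mem_of_mem_erase (hfD i)
  · refine isCycle_insert_image (p := fun i => p.getVert i) ?_ hf ?_
      fun i => Finset.ne_of_mem_erase (hfD i)
    · exact fun i j hij => Fin.ext (hp.getVert_injOn i.is_le j.is_le hij)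
    · exact Or.inl ⟨by simp, by simp⟩

theorem IsCycle.eq_of_isEven_of_subset (hC : G.IsCycle C) (hD : G.IsEven D) (hDC : D ⊆ C)
    (hne : D.Nonempty) : D = C := by
  obtain ⟨n, hn, e, v, he, hjoins, -, hv, rfl⟩ := hC
  obtain ⟨m, rfl⟩ := Nat.exists_eq_succ_of_ne_zero hn.ne'
  obtain ⟨K, -, rfl⟩ := Finset.subset_image_iff.1 hDC
  have hstart : Function.Injective (v ∘ Fin.castSucc) := by
    intro i j hij
    have hindex := hv _ _ hij
    grind
  have hend : Function.Injective (v ∘ Fin.succ) := by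
    intro i j hij
    have hindex := hv _ _ hij
    grind
  have hsum : ∑ k ∈ K, (Finsupp.single (v k.castSucc) (1 : ZMod 2) +
      Finsupp.single (v k.succ) 1) = 0 := by
    rwa [IsEven, Finset.sum_image he.injOn,
      Finset.sum_congr rfl fun k _ => Joins.boundaryTwo_eq (hjoins k)] at hD
  -- The edges `i` and `i + 1` are the only ones at the vertex `i + 1`.
  have hstep (i : Fin m) : i.castSucc ∈ K ↔ i.succ ∈ K := by
    have h := DFunLike.congr_fun hsum (v i.succ.castSucc)
    have hjoin_start (k : Fin (m + 1)) : v k.castSucc = v i.succ.castSucc ↔ k = i.succ :=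
      hstart.eq_iff
    have hjoin_end (k : Fin (m + 1)) : v k.succ = v i.succ.castSucc ↔ k = i.castSucc := by
      rw [← Fin.succ_castSucc]
      exact hend.eq_iff
    simp only [Finsupp.finsetSum_apply, Finsupp.add_apply, Finsupp.single_apply, hjoin_start,
      hjoin_end, Finset.sum_add_distrib, Finset.sum_ite_eq', Finsupp.zero_apply] at h
    by_cases i.castSucc ∈ K <;> by_cases i.succ ∈ K <;> simp_all
  have hall (i : Fin (m + 1)) : i ∈ K ↔ 0 ∈ K :=
    i.induction Iff.rfl fun j ih => (hstep j).symm.trans ih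
  obtain ⟨i, hi⟩ := Finset.image_nonempty.1 hne
  have hK : K = Finset.univ := Finset.eq_univ_of_forall fun j => (hall j).2 ((hall i).1 hi)
  rw [hK]

theorem isCycle_iff_minimal :
    G.IsCycle C ↔ Minimal (fun D => G.IsEven D ∧ D.Nonempty) C := by
  refine ⟨fun hC => ⟨⟨hC.isEven, hC.nonempty⟩, fun D hD hDC =>
    (hC.eq_of_isEven_of_subset hD.1 hDC hD.2).ge⟩, fun hC => ?_⟩
  obtain ⟨e, he⟩ := hC.prop.2
  obtain ⟨D, hDC, hD, -⟩ := hC.prop.1.exists_isCycle_mem he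
  rwa [← hC.eq_of_le ⟨hD.isEven, hD.nonempty⟩ hDC]

theorem IsEven.not_isBridge (hD : G.IsEven D) {e : G.E} (he : e ∈ D) : ¬ G.IsBridge e := by
  obtain ⟨C, -, hC, heC⟩ := hD.exists_isCycle_mem he
  exact fun hbridge => hbridge C hC heC

theorem Sim.symm {e e' : G.E} (h : G.Sim e e') : G.Sim e' e :=
  fun C hC => (h C hC).symm

theorem Sim.mem_of_isEven {e e' : G.E} (h : G.Sim e e') (hD : G.IsEven D) (he : e ∈ D) :
    e' ∈ D := by
  obtain ⟨C, hCD, hC, heC⟩ := hD.exists_isCycle_mem he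
  exact hCD ((h C hC).1 heC)

/-- The image of an edge set in the contraction of `F`: its edges outside `F`. -/
noncomputable def surviving (F : Set G.E) (D : Finset G.E) : Finset (G.contractSet F).E :=
  Finset.univ.filter fun e => e.1 ∈ D

theorem mem_surviving {e : (G.contractSet F).E} : e ∈ surviving F D ↔ e.1 ∈ D := by
  simp [surviving]

/-- The projection from the vertices of `G` to those of the contraction of `F`. -/
def toContract (F : Set G.E) (v : G.V) : (G.contractSet F).V :=
  Quot.mk _ v

theorem mapDomain_boundaryTwo_eq_zero {e : G.E} (he : e ∈ F) :
    (G.boundaryTwo e).mapDomain (toContract F) = 0 := by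
  have hends : toContract F (G.s e) = toContract F (G.t e) := Quot.sound ⟨e, he, rfl, rfl⟩
  rw [boundaryTwo, Finsupp.mapDomain_add, Finsupp.mapDomain_single, Finsupp.mapDomain_single,
    hends, ZModModule.add_self]

theorem boundaryTwo_contractSet (e : (G.contractSet F).E) :
    (G.contractSet F).boundaryTwo e = (G.boundaryTwo e.1).mapDomain (toContract F) := by
  rw [boundaryTwo, boundaryTwo, Finsupp.mapDomain_add, Finsupp.mapDomain_single,
    Finsupp.mapDomain_single]
  rfl

theorem sum_boundaryTwo_surviving (F : Set G.E) (D : Finset G.E) :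
    ∑ e ∈ surviving F D, (G.contractSet F).boundaryTwo e =
      (∑ e ∈ D, G.boundaryTwo e).mapDomain (toContract F) := by
  rw [Finsupp.mapDomain_finsetSum]
  refine Finset.sum_of_injOn Subtype.val Subtype.val_injective.injOn
    (fun e he => mem_surviving.1 he) (fun e he hne => mapDomain_boundaryTwo_eq_zero ?_)
    fun e _ => boundaryTwo_contractSet e
  by_contra heF
  exact hne ⟨⟨e, heF⟩, mem_surviving.2 he, rfl⟩

theorem isEven_surviving (hD : G.IsEven D) (F : Set G.E) :
    (G.contractSet F).IsEven (surviving F D) := by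
  rw [IsEven, sum_boundaryTwo_surviving, hD, Finsupp.mapDomain_zero]

theorem exists_sum_boundaryTwo_eq {d : G.V →₀ ZMod 2} (hd : d.mapDomain (toContract F) = 0) :
    ∃ Z : Finset G.E, ↑Z ⊆ F ∧ ∑ e ∈ Z, G.boundaryTwo e = d := by
  refine exists_finset_sum_eq_of_mem_span_zmod_two
    (Submodule.span_mono ?_ (mem_span_of_mapDomain_quotMk_eq_zero hd))
  rintro _ ⟨_, _, ⟨e, he, rfl, rfl⟩, rfl⟩
  exact ⟨e, he, (ZModModule.sub_eq_add _ _).symm⟩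

theorem IsEven.exists_surviving_eq {D' : Finset (G.contractSet F).E}
    (hD' : (G.contractSet F).IsEven D') : ∃ D, G.IsEven D ∧ surviving F D = D' := by
  let D₀ : Finset G.E := D'.map (Function.Embedding.subtype (· ∉ F))
  have mem_D₀ (e : G.E) : e ∈ D₀ ↔ ∃ e' ∈ D', e'.1 = e := Finset.mem_map
  have hD₀ : surviving F D₀ = D' := by
    ext e
    rw [mem_surviving, mem_D₀]
    exact ⟨fun ⟨e', he', h⟩ => Subtype.ext h ▸ he', fun he => ⟨e, he, rfl⟩⟩
  obtain ⟨Z, hZF, hZ⟩ : ∃ Z : Finset G.E, ↑Z ⊆ F ∧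
      ∑ e ∈ Z, G.boundaryTwo e = ∑ e ∈ D₀, G.boundaryTwo e := by
    refine exists_sum_boundaryTwo_eq ?_
    rw [← sum_boundaryTwo_surviving, hD₀, hD']
  refine ⟨D₀ ∪ Z, ?_, ?_⟩
  · have hdisj : Disjoint D₀ Z := Finset.disjoint_left.2 fun e he heZ => by
      obtain ⟨e', -, rfl⟩ := (mem_D₀ e).1 he
      exact e'.2 (hZF heZ)
    rw [IsEven, Finset.sum_union hdisj, hZ, ZModModule.add_self]
  · rw [← hD₀]
    ext e
    rw [mem_surviving, mem_surviving, Finset.mem_union]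
    exact or_iff_left fun he => e.2 (hZF he)

theorem IsEven.exists_notMem_sim (hF : ∀ e ∈ F, ¬ G.IsBridge e → ∃ e' ∉ F, G.Sim e e')
    (hD : G.IsEven D) {e : G.E} (he : e ∈ D) : ∃ e' ∉ F, G.Sim e e' := by
  by_cases heF : e ∈ F
  · exact hF e heF (hD.not_isBridge he)
  · exact ⟨e, heF, fun _ _ => Iff.rfl⟩

theorem IsEven.surviving_nonempty_iff (hF : ∀ e ∈ F, ¬ G.IsBridge e → ∃ e' ∉ F, G.Sim e e')
    (hD : G.IsEven D) : (surviving F D).Nonempty ↔ D.Nonempty := by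
  refine ⟨fun ⟨e, he⟩ => ⟨e.1, mem_surviving.1 he⟩, fun ⟨e, he⟩ => ?_⟩
  obtain ⟨e', he'F, hsim⟩ := hD.exists_notMem_sim hF he
  exact ⟨⟨e', he'F⟩, mem_surviving.2 (hsim.mem_of_isEven hD he)⟩

theorem IsEven.surviving_subset_iff (hF : ∀ e ∈ F, ¬ G.IsBridge e → ∃ e' ∉ F, G.Sim e e')
    (h₁ : G.IsEven D₁) (h₂ : G.IsEven D₂) :
    surviving F D₁ ⊆ surviving F D₂ ↔ D₁ ⊆ D₂ := by
  refine ⟨fun h e he => ?_, fun h e he => mem_surviving.2 (h (mem_surviving.1 he))⟩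
  obtain ⟨e', he'F, hsim⟩ := h₁.exists_notMem_sim hF he
  have he' : (⟨e', he'F⟩ : (G.contractSet F).E) ∈ surviving F D₁ :=
    mem_surviving.2 (hsim.mem_of_isEven h₁ he)
  exact hsim.symm.mem_of_isEven h₂ (mem_surviving.1 (h he'))

theorem image_surviving_isCycle (hF : ∀ e ∈ F, ¬ G.IsBridge e → ∃ e' ∉ F, G.Sim e e') :
    surviving F '' {C | G.IsCycle C} = {C' | (G.contractSet F).IsCycle C'} := by
  have hlift (D' : Finset (G.contractSet F).E) :
      (∃ D, (G.IsEven D ∧ D.Nonempty) ∧ surviving F D = D') ↔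
        (G.contractSet F).IsEven D' ∧ D'.Nonempty := by
    constructor
    · rintro ⟨D, ⟨hD, hne⟩, rfl⟩
      exact ⟨isEven_surviving hD F, (hD.surviving_nonempty_iff hF).2 hne⟩
    · rintro ⟨hD', hne⟩
      obtain ⟨D, hD, rfl⟩ := hD'.exists_surviving_eq
      exact ⟨D, ⟨hD, (hD.surviving_nonempty_iff hF).1 hne⟩, rfl⟩
  simp only [isCycle_iff_minimal, ← hlift]
  exact image_monotone_setOfPred_minimal fun D₁ D₂ h₁ h₂ =>
    h₁.1.surviving_subset_iff hF h₂.1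

end Multigraph

open Multigraph in
/-- No even set contains a bridge, so bridges may be contracted freely: the contraction `G^(2)` of
all bridges is a special case. -/
theorem three_graph_cycles_bijection_general (G : Multigraph) (F : Set G.E)
    (hF : ∀ e ∈ F, ¬ G.IsBridge e → ∃ e' ∉ F, G.Sim e e') :
    (∀ C : Finset G.E, G.IsCycle C → ∃ e ∈ C, e ∉ F) ∧
    Set.BijOn (surviving F) {C | G.IsCycle C} {C' | (G.contractSet F).IsCycle C'} := by
  constructor
  · intro C hC
    obtain ⟨e, he⟩ := (hC.isEven.surviving_nonempty_iff hF).2 hC.nonempty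
    exact ⟨e.1, mem_surviving.1 he, e.2⟩
  · rw [← image_surviving_isCycle hF]
    refine Set.InjOn.bijOn_image fun C₁ h₁ C₂ h₂ h => ?_
    have h₁ : G.IsEven C₁ := IsCycle.isEven h₁
    have h₂ : G.IsEven C₂ := IsCycle.isEven h₂
    exact ((h₁.surviving_subset_iff hF h₂).1 h.le).antisymm
      ((h₂.surviving_subset_iff hF h₁).1 h.ge)

theorem IsC1Choice.apply_apply {G : Multigraph} {c : G.E → G.E} (hch : IsC1Choice G c)
    (e : G.E) : c (c e) = c e :=
  (hch.2 _ _ (hch.1 e)).symm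

/-- For a connected bridgeless multigraph `G` with a choice of one edge in
each C1-set, no cycle of `G` is collapsed to a vertex in `G^(3)`, and sending a cycle
`C` of `G` to its set of surviving edges is a bijection from the cycles of `G` onto
the cycles of `G^(3)`. -/
theorem three_graph_cycles_bijection (G : Multigraph) (hc : G.Connected)
    (hb : G.Bridgeless) (c : G.E → G.E) (hch : IsC1Choice G c) :
    (∀ C : Finset G.E, G.IsCycle C → ∃ e ∈ C, c e = e) ∧
    Set.BijOn
      (fun C : Finset G.E =>
        Finset.univ.filter (fun e : (threeGraph G c).E => e.1 ∈ C))
      {C : Finset G.E | G.IsCycle C}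
      {C' : Finset (threeGraph G c).E | (threeGraph G c).IsCycle C'} := by
  have hF : ∀ e ∈ {e | c e ≠ e}, ¬ G.IsBridge e → ∃ e' ∉ {e | c e ≠ e}, G.Sim e e' :=
    fun e _ _ => ⟨c e, not_not.2 (hch.apply_apply e), hch.1 e⟩
  obtain ⟨hnoncollapsed, hbij⟩ := three_graph_cycles_bijection_general G {e | c e ≠ e} hF
  exact ⟨by simpa using hnoncollapsed, hbij⟩
end

section
/- Torelli theorem for weighted graphs: let (G1,w1) and (G2,w2) be two stable weighted graphs of genus g. Then the Jacobian tori Jac(G1,w1) and Jac(G2,w2) are isomorphic (as lattices with bilinear forms) if and only if (G1,w1)^(2) and (G2,w2)^(2) are cyclically equivalent. -/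
/-!
Dividing a Jacobian lattice by its isotropic vectors leaves the cycle space `L`; conversely the
number of null summands is the genus minus the rank `b₁` of `L`. Bridges carry no flow, so
contracting them does not change `L`, and afterwards every edge carries a flow.

Every flow is a sum of signed cycles running along it. Hence each coset `x + 2L` contains a vector
with entries in `{0, 1, -1}`, and the minimal norm in the coset is the number of odd coordinates
of `x`. An isometry `φ : L₁ ≃ L₂` therefore preserves the number of odd coordinates, that is, the
sums of the characters `x ↦ (-1) ^ x e` over the edges `e` of the two graphs agree up to a constant.
Linear independence of characters matches these characters, which gives a bijection `σ` of the
edges with `φ x (σ e) ≡ x e` mod 2. On vectors with entries in `{0, 1, -1}` this determines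
`φ x (σ e)` up to sign, and as such vectors with vanishing entry at `e` generate all the vectors
with vanishing entry at `e`, the sign depends on `e` alone.
-/

/-! ### Sublattices with conformal circuits -/

section Lattices

variable {E E₁ E₂ : Type*}

/-- Conformality of sign vectors: `d` is a `{0, 1, -1}`-vector whose nonzero entries are the signs
of the corresponding entries of `y`. -/
def ConformsTo (d y : E → ℤ) : Prop := ∀ e, d e = 0 ∨ d e = (y e).sign

namespace ConformsTo

variable {d y : E → ℤ}

theorem cases (h : ConformsTo d y) (e : E) :
    d e = 0 ∨ (d e = 1 ∧ 0 < y e) ∨ (d e = -1 ∧ y e < 0) := by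
  rcases h e, Int.sign_trichotomy (y e) with ⟨h₀ | h₁, hs | hs | hs⟩ <;>
    simp_all [Int.sign_eq_one_iff_pos, Int.sign_eq_neg_one_iff_neg]

theorem abs_le_one (h : ConformsTo d y) (e : E) : |d e| ≤ 1 := by
  rw [abs_le]
  have := h.cases e
  omega

theorem apply_eq_zero (h : ConformsTo d y) {e : E} (he : y e = 0) : d e = 0 := by
  have := h.cases e
  omega

theorem sum_natAbs_sub_lt [Fintype E] (h : ConformsTo d y) {e : E} (he : d e ≠ 0) :
    ∑ f, ((y - d) f).natAbs < ∑ f, (y f).natAbs := by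
  have hcases := h.cases
  simp only [Pi.sub_apply]
  exact Finset.sum_lt_sum (fun f _ => by grind) ⟨e, Finset.mem_univ e, by grind⟩

theorem sum_natAbs_sub_two_nsmul_lt [Fintype E] (h : ConformsTo d y) {e : E} (he : d e ≠ 0)
    (hy : 1 < |y e|) : ∑ f, ((y - 2 • d) f).natAbs < ∑ f, (y f).natAbs := by
  have hcases := h.cases
  simp only [two_nsmul, Pi.sub_apply, Pi.add_apply]
  exact Finset.sum_lt_sum (fun f _ => by grind) ⟨e, Finset.mem_univ e, by grind⟩

end ConformsTo

/-- A sublattice of `ℤ^E` has conformal circuits if at each nonzero coordinate of each of its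
elements `y`, it has an element conforming to `y` and not vanishing there. For cycle spaces of
graphs the latter are signed cycles; the property characterizes regular matroids. -/
def HasConformalCircuits (L : AddSubgroup (E → ℤ)) : Prop :=
  ∀ y ∈ L, ∀ e, y e ≠ 0 → ∃ d ∈ L, d e ≠ 0 ∧ ConformsTo d y

namespace HasConformalCircuits

variable {L : AddSubgroup (E → ℤ)}

theorem le_closure [Finite E] (hL : HasConformalCircuits L) :
    L ≤ AddSubgroup.closure {d | d ∈ L ∧ ∀ e, |d e| ≤ 1} := by
  have := Fintype.ofFinite E
  intro x hx
  induction hn : ∑ e, (x e).natAbs using Nat.strong_induction_on generalizing x with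
  | _ n ih =>
    by_cases hzero : ∃ e, x e ≠ 0
    · obtain ⟨e, he⟩ := hzero
      obtain ⟨d, hd, hde, hconf⟩ := hL x hx e he
      have hrest := ih _ (hn ▸ hconf.sum_natAbs_sub_lt hde) (L.sub_mem hx hd) rfl
      rw [← sub_add_cancel x d]
      exact add_mem hrest (AddSubgroup.subset_closure ⟨hd, hconf.abs_le_one⟩)
    · push Not at hzero
      rw [show x = 0 from funext hzero]
      exact zero_mem _

theorem exists_add_two_nsmul_abs_le_one [Finite E] (hL : HasConformalCircuits L) {x : E → ℤ}
    (hx : x ∈ L) : ∃ z ∈ L, ∀ e, |(x + 2 • z) e| ≤ 1 := by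
  have := Fintype.ofFinite E
  induction hn : ∑ e, (x e).natAbs using Nat.strong_induction_on generalizing x with
  | _ n ih =>
    by_cases hlarge : ∃ e, 1 < |x e|
    · obtain ⟨e, he⟩ := hlarge
      obtain ⟨d, hd, hde, hconf⟩ := hL x hx e (by rintro h; simp [h] at he)
      obtain ⟨z, hz, hsmall⟩ := ih _ (hn ▸ hconf.sum_natAbs_sub_two_nsmul_lt hde he)
        (L.sub_mem hx (L.nsmul_mem hd 2)) rfl
      refine ⟨z - d, L.sub_mem hz hd, ?_⟩
      rwa [show x + 2 • (z - d) = x - 2 • d + 2 • z by rw [nsmul_sub]; abel]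
    · push Not at hlarge
      exact ⟨0, L.zero_mem, by simpa using hlarge⟩

theorem inf_ker_eval (hL : HasConformalCircuits L) (e : E) :
    HasConformalCircuits (L ⊓ (Pi.evalAddMonoidHom (fun _ : E => ℤ) e).ker) := by
  rintro y ⟨hy, hye⟩ f hf
  obtain ⟨d, hd, hdf, hconf⟩ := hL y hy f hf
  exact ⟨d, ⟨hd, hconf.apply_eq_zero hye⟩, hdf, hconf⟩

theorem exists_apply_eq_one (hL : HasConformalCircuits L) {x : E → ℤ} (hx : x ∈ L) {e : E}
    (he : x e ≠ 0) : ∃ d ∈ L, (∀ f, |d f| ≤ 1) ∧ d e = 1 := by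
  obtain ⟨d, hd, hde, hconf⟩ := hL x hx e he
  rcases (hconf.cases e).resolve_left hde with ⟨h, -⟩ | ⟨h, -⟩
  · exact ⟨d, hd, hconf.abs_le_one, h⟩
  · exact ⟨-d, neg_mem hd, by simpa using hconf.abs_le_one, by simp [h]⟩

theorem map_eq_zero_of_apply_eq_zero [Finite E] (hL : HasConformalCircuits L) {e : E} (m : L →+ ℤ)
    (hm : ∀ d : L, (∀ f, |(d : E → ℤ) f| ≤ 1) → (d : E → ℤ) e = 0 → m d = 0)
    (x : L) (hx : (x : E → ℤ) e = 0) : m x = 0 := by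
  have hle : AddSubgroup.closure
      {d | d ∈ L ⊓ (Pi.evalAddMonoidHom (fun _ : E => ℤ) e).ker ∧ ∀ f, |d f| ≤ 1} ≤
      m.ker.map L.subtype :=
    (AddSubgroup.closure_le _).2 fun d hd => ⟨⟨d, hd.1.1⟩, hm _ hd.2 hd.1.2, rfl⟩
  obtain ⟨x', hx', hxx'⟩ := hle ((hL.inf_ker_eval e).le_closure ⟨x.2, hx⟩)
  rwa [← Subtype.ext hxx']

theorem exists_unit_mul_apply [Finite E] (hL : HasConformalCircuits L) (e : E) (m : L →+ ℤ)
    (hm : ∀ d : L, (∀ f, |(d : E → ℤ) f| ≤ 1) → |m d| = |(d : E → ℤ) e|) :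
    ∃ u : ℤˣ, ∀ x : L, m x = u * (x : E → ℤ) e := by
  have hker := hL.map_eq_zero_of_apply_eq_zero (e := e) m
    fun d hd hde => abs_eq_zero.1 (by rw [hm d hd, hde, abs_zero])
  by_cases he : ∃ x ∈ L, x e ≠ 0
  · obtain ⟨x₀, hx₀, hx₀e⟩ := he
    obtain ⟨d, hd, hsmall, hde⟩ := hL.exists_apply_eq_one hx₀ hx₀e
    have hunit : IsUnit (m ⟨d, hd⟩) := Int.isUnit_iff_abs_eq.2 (by simp [hm ⟨d, hd⟩ hsmall, hde])
    refine ⟨hunit.unit, fun x => ?_⟩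
    have h := hker (x - (x : E → ℤ) e • ⟨d, hd⟩) (by simp [hde])
    rwa [map_sub, map_zsmul, sub_eq_zero, smul_eq_mul, mul_comm] at h
  · push Not at he
    exact ⟨1, fun x => by rw [hker x (he x x.2), he x x.2, mul_zero]⟩

end HasConformalCircuits

/-! ### Isometries -/

/-- The number of odd coordinates of an integer vector. -/
def oddCount [Fintype E] (x : E → ℤ) : ℤ := ∑ e, x e % 2

theorem emod_two_le_mul_self (a : ℤ) : a % 2 ≤ a * a := by
  rcases eq_or_ne a 0 with rfl | h
  · rfl
  · have : a % 2 < 2 := Int.emod_lt_of_pos a two_pos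
    have : 0 < a * a := mul_self_pos.2 h
    omega

theorem emod_two_eq_mul_self_iff (a : ℤ) : a % 2 = a * a ↔ |a| ≤ 1 := by
  constructor
  · intro h
    have : a * a ≤ 1 := by omega
    exact (sq_le_one_iff_abs_le_one a).1 (by rwa [sq])
  · intro h
    rw [abs_le] at h
    obtain rfl | rfl | rfl : a = -1 ∨ a = 0 ∨ a = 1 := by omega
    all_goals rfl

section OddCount

variable [Fintype E]

theorem oddCount_add_two_nsmul (x z : E → ℤ) : oddCount (x + 2 • z) = oddCount x :=
  Finset.sum_congr rfl fun e _ => by simp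

theorem oddCount_le_dotProduct_self (x : E → ℤ) : oddCount x ≤ x ⬝ᵥ x :=
  Finset.sum_le_sum fun e _ => emod_two_le_mul_self (x e)

theorem oddCount_eq_dotProduct_self_iff {x : E → ℤ} : oddCount x = x ⬝ᵥ x ↔ ∀ e, |x e| ≤ 1 := by
  simp only [oddCount, dotProduct, ← emod_two_eq_mul_self_iff]
  simpa using Finset.sum_eq_sum_iff_of_le (s := Finset.univ) fun e _ => emod_two_le_mul_self (x e)

end OddCount

section Characters

variable {ι κ : Type*} [Fintype ι] [Fintype κ]

theorem card_fiber_eq_of_sum_eq_sum_add_const {M K : Type*} [MulOneClass M] [CommRing K]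
    [IsDomain K] [CharZero K] {χ : ι → M →* K} {ψ : κ → M →* K} {c : K}
    (h : ∀ x, ∑ i, χ i x = ∑ j, ψ j x + c) {θ : M →* K} (hθ : θ ≠ 1) :
    Nat.card {i // χ i = θ} = Nat.card {j // ψ j = θ} := by
  classical
  have hfinsupp : ∑ i, Finsupp.single (χ i) (1 : K) =
      ∑ j, Finsupp.single (ψ j) 1 + Finsupp.single 1 c := by
    refine (linearIndependent_monoidHom M K).finsuppLinearCombination_injective ?_
    funext x
    simpa using h x
  have hcoeff := DFunLike.congr_fun hfinsupp θ
  simp only [Finsupp.coe_add, Finsupp.coe_finsetSum, Pi.add_apply, Finset.sum_apply,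
    Finsupp.single_apply, Finset.sum_boole, if_neg hθ.symm, add_zero] at hcoeff
  rw [Nat.card_eq_fintype_card, Nat.card_eq_fintype_card, Fintype.card_subtype,
    Fintype.card_subtype]
  exact_mod_cast hcoeff

variable {A : Type*} [AddCommGroup A]

/-- The character `x ↦ (-1) ^ m x` of the additive group `A`, recording the parity of an additive
map `m`. -/
def parityCharacter (m : A →+ ℤ) : Multiplicative A →* ℤ :=
  (Units.coeHom ℤ).comp ((zpowersHom ℤˣ (-1)).comp m.toMultiplicative)

theorem parityCharacter_apply (m : A →+ ℤ) (x : A) :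
    parityCharacter m (Multiplicative.ofAdd x) = 1 - 2 * (m x % 2) := by
  have hdef : parityCharacter m (Multiplicative.ofAdd x) = ((-1 : ℤˣ) ^ m x : ℤˣ) := rfl
  rcases Int.even_or_odd (m x) with h | h
  · rw [hdef, h.neg_one_zpow, Int.even_iff.1 h]
    rfl
  · rw [hdef, h.neg_one_zpow, Int.odd_iff.1 h]
    rfl

theorem parityCharacter_ne_one {m : A →+ ℤ} (hm : ∃ x, m x % 2 = 1) : parityCharacter m ≠ 1 := by
  obtain ⟨x, hx⟩ := hm
  intro h
  have := parityCharacter_apply m x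
  simp [h, hx] at this

theorem sum_parityCharacter_apply (l : ι → A →+ ℤ) (x : A) :
    ∑ i, parityCharacter (l i) (Multiplicative.ofAdd x) =
      Fintype.card ι - 2 * oddCount fun i => l i x := by
  simp [parityCharacter_apply, oddCount, Finset.mul_sum]

theorem exists_equiv_emod_two_eq {l : ι → A →+ ℤ} {m : κ → A →+ ℤ}
    (hl : ∀ i, ∃ x, l i x % 2 = 1) (hm : ∀ j, ∃ x, m j x % 2 = 1)
    (hcount : ∀ x, (oddCount fun j => m j x) = oddCount fun i => l i x) :
    ∃ σ : ι ≃ κ, ∀ i x, m (σ i) x % 2 = l i x % 2 := by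
  have hfiber (θ : Multiplicative A →* ℤ) :
      Nonempty ({i // parityCharacter (l i) = θ} ≃ {j // parityCharacter (m j) = θ}) := by
    rcases eq_or_ne θ 1 with rfl | hθ
    · have : IsEmpty {i // parityCharacter (l i) = 1} :=
        ⟨fun i => parityCharacter_ne_one (hl i) i.2⟩
      have : IsEmpty {j // parityCharacter (m j) = 1} :=
        ⟨fun j => parityCharacter_ne_one (hm j) j.2⟩
      exact ⟨Equiv.equivOfIsEmpty _ _⟩
    · refine Finite.card_eq.1 (card_fiber_eq_of_sum_eq_sum_add_const
        (c := (Fintype.card ι : ℤ) - Fintype.card κ)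
        (Multiplicative.ofAdd.surjective.forall.2 fun x => ?_) hθ)
      rw [sum_parityCharacter_apply, sum_parityCharacter_apply, hcount]
      ring
  let τ (θ : Multiplicative A →* ℤ) := (hfiber θ).some
  refine ⟨Equiv.ofFiberEquiv τ, fun i x => ?_⟩
  have h := DFunLike.congr_fun (Equiv.ofFiberEquiv_map τ i) (Multiplicative.ofAdd x)
  rw [parityCharacter_apply, parityCharacter_apply] at h
  linarith

end Characters

/-- The isomorphism `ℤ^E₁ ≃ ℤ^E₂` carrying the basis vector of `e` to `ε e` times that of `σ e`. -/
def signedEquiv (σ : E₁ ≃ E₂) (ε : E₁ → ℤˣ) : (E₁ → ℤ) ≃+ (E₂ → ℤ) where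
  toFun x f := ε (σ.symm f) * x (σ.symm f)
  invFun y e := ε e * y (σ e)
  left_inv x := by
    funext e
    simp [← mul_assoc]
  right_inv y := by
    funext f
    simp [← mul_assoc]
  map_add' x y := by
    funext f
    simp [mul_add]

theorem signedEquiv_dotProduct_signedEquiv [Fintype E₁] [Fintype E₂] (σ : E₁ ≃ E₂) (ε : E₁ → ℤˣ)
    (x y : E₁ → ℤ) : signedEquiv σ ε x ⬝ᵥ signedEquiv σ ε y = x ⬝ᵥ y :=
  Fintype.sum_equiv σ.symm _ _ fun f => by
    simp [signedEquiv, mul_mul_mul_comm]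

theorem abs_eq_of_emod_two_eq {a b : ℤ} (ha : |a| ≤ 1) (hb : |b| ≤ 1) (h : a % 2 = b % 2) :
    |a| = |b| := by
  grind

section Isometry

variable [Fintype E₁] [Fintype E₂] {L₁ : AddSubgroup (E₁ → ℤ)} {L₂ : AddSubgroup (E₂ → ℤ)}

-- The number of odd coordinates of `x` is the minimal norm in the coset `x + 2L`.
theorem oddCount_le_of_isometry (h₁ : HasConformalCircuits L₁) (φ : L₁ →+ L₂)
    (hφ : ∀ x, (φ x : E₂ → ℤ) ⬝ᵥ φ x = (x : E₁ → ℤ) ⬝ᵥ x) (x : L₁) :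
    oddCount (φ x : E₂ → ℤ) ≤ oddCount (x : E₁ → ℤ) := by
  obtain ⟨z, hz, hsmall⟩ := h₁.exists_add_two_nsmul_abs_le_one x.2
  let w : L₁ := x + 2 • ⟨z, hz⟩
  have hw : (φ w : E₂ → ℤ) = φ x + 2 • (φ ⟨z, hz⟩ : E₂ → ℤ) := by
    simp only [w, map_add, map_nsmul, AddSubgroup.coe_add, AddSubgroup.coe_nsmul]
  calc oddCount (φ x : E₂ → ℤ) = oddCount (φ w : E₂ → ℤ) := by rw [hw, oddCount_add_two_nsmul]
    _ ≤ (φ w : E₂ → ℤ) ⬝ᵥ φ w := oddCount_le_dotProduct_self _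
    _ = (w : E₁ → ℤ) ⬝ᵥ w := hφ w
    _ = oddCount (w : E₁ → ℤ) := (oddCount_eq_dotProduct_self_iff.2 hsmall).symm
    _ = oddCount (x : E₁ → ℤ) := oddCount_add_two_nsmul _ _

theorem oddCount_eq_of_isometry (h₁ : HasConformalCircuits L₁) (h₂ : HasConformalCircuits L₂)
    (φ : L₁ ≃+ L₂) (hφ : ∀ x, (φ x : E₂ → ℤ) ⬝ᵥ φ x = (x : E₁ → ℤ) ⬝ᵥ x) (x : L₁) :
    oddCount (φ x : E₂ → ℤ) = oddCount (x : E₁ → ℤ) := by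
  refine le_antisymm (oddCount_le_of_isometry h₁ φ.toAddMonoidHom hφ x) ?_
  have h := oddCount_le_of_isometry h₂ φ.symm.toAddMonoidHom
    (fun y => by simpa using (hφ (φ.symm y)).symm) (φ x)
  simpa using h

theorem abs_le_one_of_isometry (h₁ : HasConformalCircuits L₁) (h₂ : HasConformalCircuits L₂)
    (φ : L₁ ≃+ L₂) (hφ : ∀ x, (φ x : E₂ → ℤ) ⬝ᵥ φ x = (x : E₁ → ℤ) ⬝ᵥ x) {x : L₁}
    (hx : ∀ e, |(x : E₁ → ℤ) e| ≤ 1) : ∀ f, |(φ x : E₂ → ℤ) f| ≤ 1 := by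
  rw [← oddCount_eq_dotProduct_self_iff] at hx ⊢
  rw [oddCount_eq_of_isometry h₁ h₂ φ hφ, hx, hφ]

theorem HasConformalCircuits.exists_apply_emod_two_eq_one {L : AddSubgroup (E → ℤ)}
    (hL : HasConformalCircuits L) {e : E} (he : ∃ x ∈ L, x e ≠ 0) :
    ∃ d : L, (d : E → ℤ) e % 2 = 1 := by
  obtain ⟨x, hx, hxe⟩ := he
  obtain ⟨d, hd, -, hde⟩ := hL.exists_apply_eq_one hx hxe
  exact ⟨⟨d, hd⟩, by simp [hde]⟩

theorem exists_equiv_apply_emod_two_eq_of_isometry (h₁ : HasConformalCircuits L₁)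
    (h₂ : HasConformalCircuits L₂) (hn₁ : ∀ e, ∃ x ∈ L₁, x e ≠ 0) (hn₂ : ∀ f, ∃ x ∈ L₂, x f ≠ 0)
    (φ : L₁ ≃+ L₂) (hφ : ∀ x, (φ x : E₂ → ℤ) ⬝ᵥ φ x = (x : E₁ → ℤ) ⬝ᵥ x) :
    ∃ σ : E₁ ≃ E₂, ∀ e x, (φ x : E₂ → ℤ) (σ e) % 2 = (x : E₁ → ℤ) e % 2 :=
  exists_equiv_emod_two_eq (l := fun e => (Pi.evalAddMonoidHom _ e).comp L₁.subtype)
    (m := fun f => ((Pi.evalAddMonoidHom _ f).comp L₂.subtype).comp φ.toAddMonoidHom)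
    (fun e => h₁.exists_apply_emod_two_eq_one (hn₁ e))
    (fun f => φ.symm.surjective.exists.2 <| by
      simpa using h₂.exists_apply_emod_two_eq_one (hn₂ f))
    (oddCount_eq_of_isometry h₁ h₂ φ hφ)

theorem exists_signedEquiv_of_isometry (h₁ : HasConformalCircuits L₁)
    (h₂ : HasConformalCircuits L₂) (hn₁ : ∀ e, ∃ x ∈ L₁, x e ≠ 0) (hn₂ : ∀ f, ∃ x ∈ L₂, x f ≠ 0)
    (φ : L₁ ≃+ L₂) (hφ : ∀ x, (φ x : E₂ → ℤ) ⬝ᵥ φ x = (x : E₁ → ℤ) ⬝ᵥ x) :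
    ∃ (σ : E₁ ≃ E₂) (ε : E₁ → ℤˣ), ∀ x : L₁, (φ x : E₂ → ℤ) = signedEquiv σ ε x := by
  obtain ⟨σ, hσ⟩ := exists_equiv_apply_emod_two_eq_of_isometry h₁ h₂ hn₁ hn₂ φ hφ
  have hunit (e : E₁) : ∃ u : ℤˣ, ∀ x : L₁, (φ x : E₂ → ℤ) (σ e) = u * (x : E₁ → ℤ) e :=
    h₁.exists_unit_mul_apply e
      (((Pi.evalAddMonoidHom _ (σ e)).comp L₂.subtype).comp φ.toAddMonoidHom)
      fun d hd => abs_eq_of_emod_two_eq (abs_le_one_of_isometry h₁ h₂ φ hφ hd _) (hd e) (hσ e d)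
  choose ε hε using hunit
  refine ⟨σ, ε, fun x => funext fun f => ?_⟩
  simpa [signedEquiv] using hε (σ.symm f) x

end Isometry

end Lattices

/-! ### Flows and directed cycles -/

theorem exists_injective_relSeries_of_reflTransGen {α : Type*} {r : α → α → Prop} {a b : α}
    (hab : Relation.ReflTransGen r a b) :
    ∃ p : RelSeries {x : α × α | r x.1 x.2}, p.head = a ∧ p.last = b ∧ Function.Injective p := by
  induction hab using Relation.ReflTransGen.head_induction_on with
  | refl =>
    exact ⟨RelSeries.singleton _ b, rfl, rfl, Function.injective_of_subsingleton (α := Fin 1) _⟩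
  | @head a c hac _ ih =>
    obtain ⟨p, rfl, hlast, hinj⟩ := ih
    by_cases ha : a ∈ p
    · obtain ⟨i, rfl⟩ := ha
      refine ⟨p.drop i, p.head_drop i, (p.last_drop i).trans hlast, fun j k hjk => ?_⟩
      have := hinj hjk
      simpa [Fin.ext_iff] using this
    · refine ⟨p.cons a hac, p.head_cons a hac, (p.last_cons a hac).trans hlast, ?_⟩
      have hnodup : (p.cons a hac).toList.Nodup := by
        rw [RelSeries.toList_cons, List.nodup_cons]
        exact ⟨by simpa using ha, List.nodup_ofFn.2 hinj⟩
      exact List.nodup_ofFn.1 hnodup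

namespace Multigraph

variable {G : Multigraph} {x y : G.E → ℤ} {e : G.E}

theorem boundaryHom_dotProduct (x : G.E → ℤ) (h : G.V → ℤ) :
    G.boundaryHom x ⬝ᵥ h = x ⬝ᵥ G.coboundaryHom h := by
  simp only [dotProduct, boundaryHom, coboundaryHom, AddMonoidHom.coe_mk, ZeroHom.coe_mk,
    Finset.sum_mul]
  rw [Finset.sum_comm]
  refine Finset.sum_congr rfl fun e _ => ?_
  simp [mul_assoc, ← Finset.mul_sum, sub_mul]

theorem mem_cycleSpace_iff : x ∈ G.cycleSpace ↔ ∀ h, x ⬝ᵥ G.coboundaryHom h = 0 := by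
  simp only [← boundaryHom_dotProduct]
  exact dotProduct_eq_zero_iff.symm

theorem extend_mem_cycleSpace {n : ℕ} {c : Fin n → G.E} (hc : Function.Injective c)
    {v : Fin (n + 1) → G.V} (hv : v 0 = v (Fin.last n)) {ε : Fin n → ℤ}
    (hε : ∀ i h, ε i * G.coboundaryHom h (c i) = h (v i.succ) - h (v i.castSucc)) :
    Function.extend c ε 0 ∈ G.cycleSpace := by
  refine mem_cycleSpace_iff.2 fun h => ?_
  have hext : Function.extend c ε 0 ⬝ᵥ G.coboundaryHom h =
      ∑ i : Fin n, (h (v i.succ) - h (v i.castSucc)) :=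
    (Fintype.sum_of_injective c hc _ _
      (fun f hf => by rw [Function.extend_apply' _ _ _ hf, Pi.zero_apply, zero_mul])
      (fun i => by rw [hc.extend_apply, hε])).symm
  have htele := (Fin.sum_univ_succ (h ∘ v)).symm.trans (Fin.sum_univ_castSucc (h ∘ v))
  simp only [Function.comp_apply, ← hv] at htele
  rw [hext, Finset.sum_sub_distrib]
  linarith

theorem exists_mem_cycleSpace_of_not_isBridge (he : ¬ G.IsBridge e) :
    ∃ d ∈ G.cycleSpace, d e ≠ 0 := by
  simp only [IsBridge, not_forall, not_not] at he
  obtain ⟨-, ⟨n, -, c, v, hc, hwalk, hv, -, rfl⟩, he⟩ := he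
  obtain ⟨i, -, rfl⟩ := Finset.mem_image.1 he
  have hsign (j : Fin n) : ∃ u : ℤˣ, ∀ h : G.V → ℤ,
      u * G.coboundaryHom h (c j) = h (v j.succ) - h (v j.castSucc) := by
    rcases hwalk j with ⟨hs, ht⟩ | ⟨hs, ht⟩
    · exact ⟨1, fun h => by simp [coboundaryHom, hs, ht]⟩
    · exact ⟨-1, fun h => by simp [coboundaryHom, hs, ht]⟩
  choose u hu using hsign
  exact ⟨_, extend_mem_cycleSpace hc hv hu, by simp [hc.extend_apply]⟩

variable (y) in
/-- The tail of an edge oriented along the flow `y`; edges with `y e = 0` are reversed. -/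
def tailAlong (e : G.E) : G.V := if 0 < y e then G.s e else G.t e

variable (y) in
/-- The head of an edge oriented along the flow `y`; edges with `y e = 0` are reversed. -/
def headAlong (e : G.E) : G.V := if 0 < y e then G.t e else G.s e

theorem sign_mul_coboundaryHom (he : y e ≠ 0) (h : G.V → ℤ) :
    (y e).sign * G.coboundaryHom h e = h (headAlong y e) - h (tailAlong y e) := by
  rcases he.lt_or_gt with hneg | hpos
  · simp [coboundaryHom, headAlong, tailAlong, hneg.not_gt, Int.sign_eq_neg_one_of_neg hneg]
  · simp [coboundaryHom, headAlong, tailAlong, hpos, Int.sign_eq_one_of_pos hpos]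

theorem mul_coboundaryHom_eq_abs_mul (y : G.E → ℤ) (h : G.V → ℤ) (e : G.E) :
    y e * G.coboundaryHom h e = |y e| * (h (headAlong y e) - h (tailAlong y e)) := by
  rcases eq_or_ne (y e) 0 with he | he
  · simp [he]
  · rw [← sign_mul_coboundaryHom he, ← mul_assoc, mul_comm |y e|, Int.sign_mul_abs]

/-- The vertices `a` and `b` are joined by an edge of the support of `y`, traversed along `y`. -/
def StepAlong (y : G.E → ℤ) (a b : G.V) : Prop :=
  ∃ e, y e ≠ 0 ∧ tailAlong y e = a ∧ headAlong y e = b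

-- Otherwise `y` has positive net flow into the set of vertices reachable from the head of `e`.
theorem reflTransGen_stepAlong (hy : y ∈ G.cycleSpace) (he : y e ≠ 0) :
    Relation.ReflTransGen (StepAlong y) (headAlong y e) (tailAlong y e) := by
  classical
  by_contra hnot
  let reach : G.V → Prop := Relation.ReflTransGen (StepAlong y) (headAlong y e)
  let h : G.V → ℤ := fun v => if reach v then 1 else 0
  have hmono (f : G.E) (hf : y f ≠ 0) : h (tailAlong y f) ≤ h (headAlong y f) := by
    have : reach (tailAlong y f) → reach (headAlong y f) := fun ht => ht.tail ⟨f, hf, rfl, rfl⟩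
    grind
  refine (mem_cycleSpace_iff.1 hy h).not_gt
    (Finset.sum_pos' (fun f _ => ?_) ⟨e, Finset.mem_univ e, ?_⟩)
  · rw [mul_coboundaryHom_eq_abs_mul]
    rcases eq_or_ne (y f) 0 with hf | hf
    · simp [hf]
    · exact mul_nonneg (abs_nonneg _) (sub_nonneg.2 (hmono f hf))
  · rw [mul_coboundaryHom_eq_abs_mul]
    simp [h, reach, hnot, he, Relation.ReflTransGen.refl]

/-- `c` lists the edges and `v` the vertices of a cycle all of whose edges lie in the support of `y`
and are traversed along `y`. -/
structure IsDirectedCycle (y : G.E → ℤ) {n : ℕ} (c : Fin (n + 1) → G.E) (v : Fin (n + 2) → G.V) :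
    Prop where
  apply_ne_zero : ∀ i, y (c i) ≠ 0
  tailAlong_eq : ∀ i, tailAlong y (c i) = v i.castSucc
  headAlong_eq : ∀ i, headAlong y (c i) = v i.succ
  closed : v 0 = v (Fin.last (n + 1))
  injective : Function.Injective fun i : Fin (n + 1) => v i.castSucc

namespace IsDirectedCycle

variable {n : ℕ} {c : Fin (n + 1) → G.E} {v : Fin (n + 2) → G.V}

theorem injective_edges (h : IsDirectedCycle y c v) : Function.Injective c := fun i j hij =>
  h.injective <| by simpa [h.tailAlong_eq] using congrArg (tailAlong y) hij

theorem isCycle (h : IsDirectedCycle y c v) : G.IsCycle (Finset.image c Finset.univ) := by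
  refine ⟨n + 1, n.succ_pos, c, v, h.injective_edges, fun i => ?_, h.closed, fun i j hij => ?_,
    rfl⟩
  · rw [← h.tailAlong_eq, ← h.headAlong_eq]
    by_cases hi : 0 < y (c i) <;> simp [tailAlong, headAlong, hi]
  · have hzero {k : Fin (n + 1)} (hk : v k.castSucc = v (Fin.last (n + 1))) : k = 0 :=
      h.injective (hk.trans h.closed.symm)
    cases i using Fin.lastCases with
    | last =>
      cases j using Fin.lastCases with
      | last => exact .inl rfl
      | cast j => exact .inr (.inr ⟨rfl, congrArg Fin.castSucc (hzero hij.symm)⟩)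
    | cast i =>
      cases j using Fin.lastCases with
      | last => exact .inr (.inl ⟨congrArg Fin.castSucc (hzero hij), rfl⟩)
      | cast j => exact .inl (congrArg Fin.castSucc (h.injective hij))

theorem exists_mem_cycleSpace (h : IsDirectedCycle y c v) :
    ∃ d ∈ G.cycleSpace, (∀ i, d (c i) ≠ 0) ∧ ConformsTo d y := by
  refine ⟨Function.extend c (fun i => (y (c i)).sign) 0,
    extend_mem_cycleSpace h.injective_edges h.closed fun i g => ?_, fun i => ?_, fun f => ?_⟩
  · rw [sign_mul_coboundaryHom (h.apply_ne_zero i), h.tailAlong_eq, h.headAlong_eq]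
  · rw [h.injective_edges.extend_apply]
    exact Int.sign_eq_zero_iff_zero.not.2 (h.apply_ne_zero i)
  · by_cases hf : ∃ i, c i = f
    · obtain ⟨i, rfl⟩ := hf
      exact .inr (h.injective_edges.extend_apply _ _ i)
    · exact .inl (Function.extend_apply' _ _ _ hf)

end IsDirectedCycle

theorem exists_isDirectedCycle (hy : y ∈ G.cycleSpace) (he : y e ≠ 0) :
    ∃ (n : ℕ) (c : Fin (n + 1) → G.E) (v : Fin (n + 2) → G.V),
      IsDirectedCycle y c v ∧ c (Fin.last n) = e := by
  obtain ⟨p, hhead, hlast, hinj⟩ :=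
    exists_injective_relSeries_of_reflTransGen (reflTransGen_stepAlong hy he)
  choose q hq hqtail hqhead using p.step
  refine ⟨p.length, Fin.snoc (α := fun _ => G.E) q e, Fin.snoc (α := fun _ => G.V) p (p 0),
    ⟨fun i => ?_, fun i => ?_, fun i => ?_, ?_, ?_⟩, Fin.snoc_last _ _⟩
  · cases i using Fin.lastCases with
    | last => simpa
    | cast i => simpa using hq i
  · cases i using Fin.lastCases with
    | last =>
      rw [Fin.snoc_last, Fin.snoc_castSucc]
      exact hlast.symm
    | cast i =>
      rw [Fin.snoc_castSucc, Fin.snoc_castSucc]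
      exact hqtail i
  · cases i using Fin.lastCases with
    | last =>
      rw [Fin.snoc_last, Fin.succ_last, Fin.snoc_last]
      exact hhead.symm
    | cast i =>
      rw [Fin.snoc_castSucc, Fin.succ_castSucc, Fin.snoc_castSucc]
      exact hqhead i
  · simp
  · simpa using hinj

theorem hasConformalCircuits_cycleSpace (G : Multigraph) : HasConformalCircuits G.cycleSpace := by
  intro y hy e he
  obtain ⟨n, c, v, hcycle, rfl⟩ := exists_isDirectedCycle hy he
  obtain ⟨d, hd, hdc, hconf⟩ := hcycle.exists_mem_cycleSpace
  exact ⟨d, hd, hdc _, hconf⟩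

theorem apply_eq_zero_of_isBridge (hx : x ∈ G.cycleSpace) (he : G.IsBridge e) : x e = 0 := by
  by_contra hne
  obtain ⟨n, c, v, hcycle, rfl⟩ := exists_isDirectedCycle hx hne
  exact he _ hcycle.isCycle (Finset.mem_image_of_mem c (Finset.mem_univ _))

end Multigraph

/-! ### Contraction and the rank of the cycle space -/

theorem finrank_range_add_finrank_ker_of_hasRankNullity.{u, v, w} {R : Type v} {M : Type u}
    {N : Type w} [Ring R] [StrongRankCondition R] [HasRankNullity.{u} R] [AddCommGroup M]
    [Module R M] [Module.Finite R M] [AddCommGroup N] [Module R N] (f : M →ₗ[R] N) :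
    Module.finrank R (LinearMap.range f) + Module.finrank R (LinearMap.ker f) =
      Module.finrank R M := by
  rw [← f.quotKerEquivRange.finrank_eq, Submodule.finrank_quotient_add_finrank]

namespace Multigraph

variable {G : Multigraph}

section Contraction

variable {F : Set G.E}

variable (F) in
/-- The projection from the vertices of `G` to those of its contraction. -/
def contractProj : G.V → (G.contractSet F).V := Quot.mk _

variable (F) in
/-- The chains (integral combinations of edges) supported on the set `F` of edges. -/
def chainsOn : AddSubgroup (G.E → ℤ) := AddSubgroup.pi Fᶜ fun _ => ⊥

theorem sum_contractSet_E {f : G.E → ℤ} (hf : ∀ e ∈ F, f e = 0) :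
    ∑ e : (G.contractSet F).E, f e.1 = ∑ e, f e := by
  refine Fintype.sum_of_injective (fun e : (G.contractSet F).E => e.1) Subtype.val_injective _ _
    (fun e he => hf e ?_) fun _ => rfl
  by_contra heF
  exact he ⟨⟨e, heF⟩, rfl⟩

theorem dotProduct_coboundaryHom_comp_contractProj (x : G.E → ℤ) (h : (G.contractSet F).V → ℤ) :
    x ⬝ᵥ G.coboundaryHom (h ∘ contractProj F) =
      (fun e : (G.contractSet F).E => x e.1) ⬝ᵥ (G.contractSet F).coboundaryHom h := by
  refine (sum_contractSet_E fun e heF => ?_).symm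
  have hproj : contractProj F (G.s e) = contractProj F (G.t e) := Quot.sound ⟨e, heF, rfl, rfl⟩
  simp [coboundaryHom, hproj]

theorem single_sub_single_mem_map_boundaryHom {a b : G.V}
    (hab : contractProj F a = contractProj F b) :
    Pi.single b 1 - Pi.single a 1 ∈ (chainsOn F).map G.boundaryHom := by
  replace hab := Quot.eqvGen_exact hab
  induction hab with
  | rel a b hab =>
    obtain ⟨e, he, rfl, rfl⟩ := hab
    refine ⟨Pi.single e 1, fun f hf => ?_, ?_⟩
    · exact Pi.single_eq_of_ne (ne_of_mem_of_not_mem he hf).symm 1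
    · funext v
      simp [boundaryHom, Pi.single_apply, eq_comm]
  | refl a => simp
  | symm a b _ ih => simpa using neg_mem ih
  | trans a b c _ _ ih₁ ih₂ => simpa using add_mem ih₂ ih₁

theorem mem_map_boundaryHom_chainsOn_iff {D : G.V → ℤ} :
    D ∈ (chainsOn F).map G.boundaryHom ↔
      ∀ h : (G.contractSet F).V → ℤ, D ⬝ᵥ h ∘ contractProj F = 0 := by
  constructor
  · rintro ⟨x, hx, rfl⟩ h
    have hx' : (fun e : (G.contractSet F).E => x e.1) = 0 := funext fun e => hx e.1 e.2
    rw [boundaryHom_dotProduct, dotProduct_coboundaryHom_comp_contractProj, hx', zero_dotProduct]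
  · intro hD
    have hrep : Function.Surjective (contractProj F) := Quot.mk_surjective
    let rep : G.V → G.V := Function.surjInv hrep ∘ contractProj F
    have hdecomp : D = ∑ v, D v • (Pi.single v 1 - Pi.single (rep v) 1 : G.V → ℤ) := by
      funext u
      have hu : ∑ v, D v * (Pi.single (rep v) 1 : G.V → ℤ) u = 0 :=
        hD fun q => (Pi.single (Function.surjInv hrep q) 1 : G.V → ℤ) u
      simp only [Pi.single_apply, mul_ite, mul_one, mul_zero] at hu
      simp [mul_sub, Finset.sum_sub_distrib, Pi.single_apply, hu]
    rw [hdecomp]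
    exact sum_mem fun v _ => zsmul_mem
      (single_sub_single_mem_map_boundaryHom (Function.surjInv_eq hrep _)) _

/-- Restriction of flows to the edges of a contraction, on which they are again flows. -/
def restrictHom (F : Set G.E) : G.cycleSpace →+ (G.contractSet F).cycleSpace where
  toFun x := ⟨fun e => (x : G.E → ℤ) e.1, mem_cycleSpace_iff.2 fun h => by
    rw [← dotProduct_coboundaryHom_comp_contractProj]
    exact mem_cycleSpace_iff.1 x.2 _⟩
  map_zero' := rfl
  map_add' _ _ := rfl

-- Extend a flow by zero: the boundary of the result is also that of a chain supported on `F`, which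
-- is then subtracted.
theorem restrictHom_surjective (F : Set G.E) : Function.Surjective (restrictHom F) := by
  intro y
  let x : G.E → ℤ := Function.extend Subtype.val (y : (G.contractSet F).E → ℤ) 0
  have hx (e : (G.contractSet F).E) : x e.1 = (y : (G.contractSet F).E → ℤ) e :=
    Subtype.val_injective.extend_apply _ _ e
  obtain ⟨z, hz, hzx⟩ : G.boundaryHom x ∈ (chainsOn F).map G.boundaryHom := by
    refine mem_map_boundaryHom_chainsOn_iff.2 fun h => ?_
    rw [boundaryHom_dotProduct, dotProduct_coboundaryHom_comp_contractProj, funext hx]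
    exact mem_cycleSpace_iff.1 y.2 h
  refine ⟨⟨x - z, ?_⟩, Subtype.ext (funext fun e => ?_)⟩
  · rw [cycleSpace, AddMonoidHom.mem_ker, map_sub, hzx, sub_self]
  · change x e.1 - z e.1 = _
    rw [hx, show z e.1 = 0 from hz e.1 e.2, sub_zero]

theorem jacIsoGraph_contractSet (hF : ∀ x ∈ G.cycleSpace, ∀ e ∈ F, x e = 0) :
    JacIsoGraph G (G.contractSet F) := by
  have hinj : Function.Injective (restrictHom F) := by
    refine (injective_iff_map_eq_zero _).2 fun x hx => Subtype.ext (funext fun e => ?_)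
    by_cases he : e ∈ F
    · exact hF x x.2 e he
    · exact congrFun (congrArg Subtype.val hx) ⟨e, he⟩
  exact ⟨AddEquiv.ofBijective _ ⟨hinj, restrictHom_surjective F⟩, fun x y =>
    sum_contractSet_E (f := fun e => (x : G.E → ℤ) e * (y : G.E → ℤ) e) fun e he => by
      rw [hF x x.2 e he, zero_mul]⟩

theorem jacIsoGraph_contractBridges (G : Multigraph) : JacIsoGraph G G.contractBridges :=
  jacIsoGraph_contractSet fun _ hx _ he => apply_eq_zero_of_isBridge hx he

theorem exists_mem_cycleSpace_contractBridges (e : G.contractBridges.E) :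
    ∃ x ∈ G.contractBridges.cycleSpace, x e ≠ 0 := by
  obtain ⟨d, hd, hde⟩ := exists_mem_cycleSpace_of_not_isBridge e.2
  exact ⟨_, (restrictHom _ ⟨d, hd⟩).2, hde⟩

end Contraction

theorem contractProj_univ_eq (hG : G.Connected) (a b : G.V) :
    contractProj (Set.univ : Set G.E) a = contractProj Set.univ b := by
  induction hG.2 a b with
  | refl => rfl
  | tail _ hbc ih =>
    rw [ih]
    obtain ⟨e, ⟨rfl, rfl⟩ | ⟨rfl, rfl⟩⟩ := hbc
    · exact Quot.sound ⟨e, trivial, rfl, rfl⟩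
    · exact (Quot.sound ⟨e, trivial, rfl, rfl⟩).symm

theorem mem_range_boundaryHom_iff (hG : G.Connected) {D : G.V → ℤ} :
    D ∈ G.boundaryHom.range ↔ ∑ v, D v = 0 := by
  have htop : chainsOn (Set.univ : Set G.E) = ⊤ := by
    ext
    simp [chainsOn, AddSubgroup.mem_pi]
  rw [AddMonoidHom.range_eq_map, ← htop, mem_map_boundaryHom_chainsOn_iff]
  refine ⟨fun h => by simpa [dotProduct] using h 1, fun h g => ?_⟩
  obtain ⟨v₀⟩ := hG.1
  have hconst : g ∘ contractProj Set.univ = fun _ => g (contractProj Set.univ v₀) :=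
    funext fun v => congrArg g (contractProj_univ_eq hG v v₀)
  rw [hconst, dotProduct, ← Finset.sum_mul, h, zero_mul]

theorem finrank_cycleSpace (hG : G.Connected) : (Module.finrank ℤ G.cycleSpace : ℤ) = G.b1 := by
  obtain ⟨v₀⟩ := hG.1
  let boundary : (G.E → ℤ) →ₗ[ℤ] (G.V → ℤ) := G.boundaryHom.toIntLinearMap
  let total : (G.V → ℤ) →ₗ[ℤ] ℤ := ∑ v, LinearMap.proj v
  have hrange : LinearMap.range boundary = LinearMap.ker total := by
    ext D
    have hmem : D ∈ LinearMap.range boundary ↔ D ∈ G.boundaryHom.range := Iff.rfl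
    simp [hmem, mem_range_boundaryHom_iff hG, total]
  have hsurj : LinearMap.range total = ⊤ :=
    LinearMap.range_eq_top.2 fun k => ⟨Pi.single v₀ k, by simp [total]⟩
  have hboundary := finrank_range_add_finrank_ker_of_hasRankNullity boundary
  have htotal := finrank_range_add_finrank_ker_of_hasRankNullity total
  rw [hrange, Module.finrank_fintype_fun_eq_card] at hboundary
  rw [hsurj, finrank_top, Module.finrank_self, Module.finrank_fintype_fun_eq_card] at htotal
  have hker : Module.finrank ℤ (LinearMap.ker boundary) = Module.finrank ℤ G.cycleSpace := rfl
  unfold b1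
  omega

end Multigraph

/-! ### Jacobian lattices -/

section GraphLattices

variable {G₁ G₂ G₃ : Multigraph}

theorem JacIsoGraph.symm (h : JacIsoGraph G₁ G₂) : JacIsoGraph G₂ G₁ := by
  obtain ⟨φ, hφ⟩ := h
  exact ⟨φ.symm, fun x y => by rw [← hφ, AddEquiv.apply_symm_apply, AddEquiv.apply_symm_apply]⟩

theorem JacIsoGraph.trans (h₁₂ : JacIsoGraph G₁ G₂) (h₂₃ : JacIsoGraph G₂ G₃) :
    JacIsoGraph G₁ G₃ := by
  obtain ⟨φ, hφ⟩ := h₁₂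
  obtain ⟨ψ, hψ⟩ := h₂₃
  exact ⟨φ.trans ψ, fun x y => (hψ _ _).trans (hφ x y)⟩

theorem JacIsoGraph.b1_eq (h : JacIsoGraph G₁ G₂) (h₁ : G₁.Connected) (h₂ : G₂.Connected) :
    G₁.b1 = G₂.b1 := by
  obtain ⟨φ, -⟩ := h
  rw [← Multigraph.finrank_cycleSpace h₁, ← Multigraph.finrank_cycleSpace h₂,
    φ.toIntLinearEquiv.finrank_eq]

theorem jacIsoGraph_contractBridges_iff :
    JacIsoGraph G₁.contractBridges G₂.contractBridges ↔ JacIsoGraph G₁ G₂ := by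
  have h₁ := Multigraph.jacIsoGraph_contractBridges G₁
  have h₂ := Multigraph.jacIsoGraph_contractBridges G₂
  exact ⟨fun h => (h₁.trans h).trans h₂.symm, fun h => (h₁.symm.trans h).trans h₂⟩

theorem cyclicallyEquivalent_iff_exists_signedEquiv :
    CyclicallyEquivalent G₁ G₂ ↔ ∃ (σ : G₁.E ≃ G₂.E) (ε : G₁.E → ℤˣ),
      G₁.cycleSpace.map (signedEquiv σ ε).toAddMonoidHom = G₂.cycleSpace := by
  constructor
  · rintro ⟨σ, ε, hε, himage⟩
    choose u hu using fun e => Int.isUnit_iff.2 (hε e)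
    obtain rfl : (fun e => (u e : ℤ)) = ε := funext hu
    exact ⟨σ, u, SetLike.coe_injective himage⟩
  · rintro ⟨σ, u, hmap⟩
    exact ⟨σ, fun e => u e, fun e => Int.isUnit_iff.1 (u e).isUnit, congrArg SetLike.coe hmap⟩

theorem CyclicallyEquivalent.jacIsoGraph (h : CyclicallyEquivalent G₁ G₂) :
    JacIsoGraph G₁ G₂ := by
  obtain ⟨σ, ε, hmap⟩ := cyclicallyEquivalent_iff_exists_signedEquiv.1 h
  exact ⟨((signedEquiv σ ε).addSubgroupMap _).trans (AddEquiv.addSubgroupCongr hmap),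
    fun x y => signedEquiv_dotProduct_signedEquiv σ ε x y⟩

theorem JacIsoGraph.cyclicallyEquivalent (h : JacIsoGraph G₁ G₂)
    (hn₁ : ∀ e, ∃ x ∈ G₁.cycleSpace, x e ≠ 0) (hn₂ : ∀ e, ∃ x ∈ G₂.cycleSpace, x e ≠ 0) :
    CyclicallyEquivalent G₁ G₂ := by
  obtain ⟨φ, hφ⟩ := h
  obtain ⟨σ, ε, hσ⟩ := exists_signedEquiv_of_isometry G₁.hasConformalCircuits_cycleSpace
    G₂.hasConformalCircuits_cycleSpace hn₁ hn₂ φ fun x => hφ x x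
  refine cyclicallyEquivalent_iff_exists_signedEquiv.2 ⟨σ, ε, le_antisymm ?_ fun y hy => ?_⟩
  · rintro _ ⟨x, hx, rfl⟩
    exact hσ ⟨x, hx⟩ ▸ (φ ⟨x, hx⟩).2
  · refine ⟨φ.symm ⟨y, hy⟩, (φ.symm ⟨y, hy⟩).2, (hσ _).symm.trans ?_⟩
    rw [AddEquiv.apply_symm_apply]

theorem cyclicallyEquivalent_contractBridges_iff :
    CyclicallyEquivalent G₁.contractBridges G₂.contractBridges ↔ JacIsoGraph G₁ G₂ :=
  ⟨fun h => jacIsoGraph_contractBridges_iff.1 h.jacIsoGraph,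
    fun h => (jacIsoGraph_contractBridges_iff.2 h).cyclicallyEquivalent
      Multigraph.exists_mem_cycleSpace_contractBridges
      Multigraph.exists_mem_cycleSpace_contractBridges⟩

end GraphLattices

namespace WeightedGraph

variable {X X₁ X₂ : WeightedGraph}

/-- `Jac(G₁, w₁) ≅ Jac(G₂, w₂)`: an isomorphism of the Jacobian lattices, null summands included,
preserving the bilinear forms. -/
def JacIso (X₁ X₂ : WeightedGraph) : Prop :=
  ∃ φ : X₁.JacLattice ≃+ X₂.JacLattice,
    ∀ p q : X₁.JacLattice, X₂.jacForm (φ p) (φ q) = X₁.jacForm p q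

theorem jacForm_self_eq_zero_iff {p : X.JacLattice} : X.jacForm p p = 0 ↔ p.1 = 0 :=
  dotProduct_self_eq_zero.trans (ZeroMemClass.coe_eq_zero (x := p.1))

theorem fst_apply_eq_of_fst_eq {φ : X₁.JacLattice ≃+ X₂.JacLattice}
    (hφ : ∀ p q, X₂.jacForm (φ p) (φ q) = X₁.jacForm p q) {p q : X₁.JacLattice}
    (hpq : p.1 = q.1) : (φ p).1 = (φ q).1 := by
  rw [← sub_eq_zero, ← Prod.fst_sub, ← map_sub, ← jacForm_self_eq_zero_iff, hφ,
    jacForm_self_eq_zero_iff, Prod.fst_sub, hpq, sub_self]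

theorem JacIso.jacIsoGraph (h : JacIso X₁ X₂) : JacIsoGraph X₁.G X₂.G := by
  obtain ⟨φ, hφ⟩ := h
  let ψ : X₁.G.cycleSpace →+ X₂.G.cycleSpace :=
    (AddMonoidHom.fst _ _).comp (φ.toAddMonoidHom.comp (AddMonoidHom.inl _ _))
  have hψ (p : X₁.JacLattice) : ψ p.1 = (φ p).1 := fst_apply_eq_of_fst_eq hφ rfl
  have hinj : Function.Injective ψ := by
    refine (injective_iff_map_eq_zero _).2 fun x hx => ?_
    have hnorm : X₁.jacForm (x, 0) (x, 0) = 0 := by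
      rw [← hφ]
      exact jacForm_self_eq_zero_iff.2 hx
    exact jacForm_self_eq_zero_iff.1 hnorm
  have hsurj : Function.Surjective ψ := fun y =>
    ⟨(φ.symm (y, 0)).1, by rw [hψ, AddEquiv.apply_symm_apply]⟩
  exact ⟨AddEquiv.ofBijective ψ ⟨hinj, hsurj⟩, fun x y => hφ (x, 0) (y, 0)⟩

theorem jacIso_of_jacIsoGraph (h : JacIsoGraph X₁.G X₂.G)
    (hw : X₁.totalWeight = X₂.totalWeight) : JacIso X₁ X₂ := by
  obtain ⟨φ, hφ⟩ := h
  exact ⟨φ.prodCongr (LinearEquiv.funCongrLeft ℤ ℤ (finCongr hw.symm)).toAddEquiv,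
    fun p q => hφ p.1 q.1⟩

theorem genus_eq_b1_add_totalWeight (X : WeightedGraph) : X.genus = X.G.b1 + X.totalWeight := by
  simp [genus, totalWeight]

theorem jacIso_iff_jacIsoGraph (h₁ : X₁.G.Connected) (h₂ : X₂.G.Connected)
    (hg : X₁.genus = X₂.genus) : JacIso X₁ X₂ ↔ JacIsoGraph X₁.G X₂.G := by
  refine ⟨JacIso.jacIsoGraph, fun h => jacIso_of_jacIsoGraph h ?_⟩
  rw [genus_eq_b1_add_totalWeight, genus_eq_b1_add_totalWeight, h.b1_eq h₁ h₂,
    add_right_inj] at hg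
  exact_mod_cast hg

end WeightedGraph

theorem weighted_graph_torelli_general {X₁ X₂ : WeightedGraph} (h₁ : X₁.G.Connected)
    (h₂ : X₂.G.Connected) (hg : X₁.genus = X₂.genus) :
    X₁.JacIso X₂ ↔ CyclicallyEquivalent X₁.G.contractBridges X₂.G.contractBridges :=
  (WeightedGraph.jacIso_iff_jacIsoGraph h₁ h₂ hg).trans
    cyclicallyEquivalent_contractBridges_iff.symm

/-- Torelli theorem for weighted graphs: for two stable weighted graphs
of genus `g`, the Jacobian tori are isomorphic (as lattices with bilinear forms) if and
only if `(G₁,w₁)^(2)` and `(G₂,w₂)^(2)` are cyclically equivalent. -/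
theorem weighted_graph_torelli (X₁ X₂ : WeightedGraph) (g : ℤ)
    (h₁ : X₁.Stable) (h₂ : X₂.Stable) (hg₁ : X₁.genus = g) (hg₂ : X₂.genus = g) :
    (∃ φ : X₁.JacLattice ≃+ X₂.JacLattice,
      ∀ p q : X₁.JacLattice, X₂.jacForm (φ p) (φ q) = X₁.jacForm p q) ↔
    CyclicallyEquivalent X₁.G.contractBridges X₂.G.contractBridges :=
  weighted_graph_torelli_general h₁.1 h₂.1 (hg₁.trans hg₂.symm)
end
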